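/- For every real number α, define ψ_α : ℝ → ℝ by ψ_α(x) = ((α−1)/2)·x³ + (3/2)·(α−1)·x² + α·x + 1 for x ≤ 0 and ψ_α(x) = ((α+1)/2)·x³ − (3/2)·(α+1)·x² + α·x + 1 for x ≥ 0 (the two formulas agree at x = 0). Then: ψ_α(−1) = 0 and ψ_α(1) = 0; ψ_α(0) = 1; ψ_α is differentiable at every point of ℝ and its derivative at 0 equals α; the second derivative of ψ_α vanishes at −1 and at 1; and the fourth iterated derivative of ψ_α vanishes at every point of (−1,0) ∪ (0,1). -/

import Mathlib

/-!
A solution of `φ'''' = 0` off the node `0` is a cubic on each side of it. On one side, the value `1`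
at the node and the two conditions `φ = φ'' = 0` at the endpoint leave exactly one coefficient free,
the slope at the node. Two such cubics with the same slope `α` glue to a differentiable function,
and this function is `ψ_α`: the system has a solution for every slope.
-/

open Set

/-- The function `ψ_α` of Remark 2.7: a piecewise cubic on `ℝ`. -/
noncomputable def psi (α : ℝ) (x : ℝ) : ℝ :=
  if x ≤ 0 then
    (α - 1) / 2 * x ^ 3 + 3 / 2 * (α - 1) * x ^ 2 + α * x + 1
  else
    (α + 1) / 2 * x ^ 3 - 3 / 2 * (α + 1) * x ^ 2 + α * x + 1

open Filter Polynomial Topology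

section General

variable {𝕜 : Type*} [NontriviallyNormedField 𝕜]

theorem semiconj_eval_derivative_deriv :
    Function.Semiconj (fun (p : 𝕜[X]) (x : 𝕜) => p.eval x) derivative deriv :=
  fun p => funext fun _ => p.deriv.symm

theorem iterate_deriv_eq_eval_of_eventuallyEq {f : 𝕜 → 𝕜} {p : 𝕜[X]} {x : 𝕜}
    (h : f =ᶠ[𝓝 x] fun y => p.eval y) (n : ℕ) :
    deriv^[n] f x = (derivative^[n] p).eval x := by
  rw [← iteratedDeriv_eq_iterate, h.iteratedDeriv_eq n, iteratedDeriv_eq_iterate,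
    ← (semiconj_eval_derivative_deriv.iterate_right n).eq p]

theorem hasDerivAt_of_eqOn_Iic_of_eqOn_Ici [LinearOrder 𝕜] {F : Type*} [NormedAddCommGroup F]
    [NormedSpace 𝕜 F] {f g h : 𝕜 → F} {f' : F} {x : 𝕜} (hfg : EqOn f g (Iic x))
    (hfh : EqOn f h (Ici x)) (hg : HasDerivAt g f' x) (hh : HasDerivAt h f' x) :
    HasDerivAt f f' x := by
  have hleft : HasDerivWithinAt f f' (Iic x) x :=
    hg.hasDerivWithinAt.congr_of_mem hfg self_mem_Iic
  have hright : HasDerivWithinAt f f' (Ici x) x :=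
    hh.hasDerivWithinAt.congr_of_mem hfh self_mem_Ici
  simpa only [Iic_union_Ici, hasDerivWithinAt_univ] using hleft.union hright

theorem derivative_toPoly {R : Type*} [CommSemiring R] (P : Cubic R) :
    derivative P.toPoly = (⟨0, 3 * P.a, 2 * P.b, P.c⟩ : Cubic R).toPoly := by
  simp only [Cubic.toPoly, derivative_add, derivative_C_mul, derivative_X_pow, derivative_X,
    derivative_C, map_mul, map_zero, map_ofNat, Nat.cast_ofNat]
  ring

theorem eval_iterate_derivative_two_toPoly {R : Type*} [CommSemiring R] (P : Cubic R) (x : R) :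
    (derivative^[2] P.toPoly).eval x = 6 * P.a * x + 2 * P.b := by
  simp only [Function.iterate_succ_apply, Function.iterate_zero_apply, derivative_toPoly]
  simp only [Cubic.toPoly, eval_add, eval_mul, eval_C, eval_pow, eval_X]
  ring

theorem iterate_derivative_four_toPoly {R : Type*} [Semiring R] (P : Cubic R) :
    derivative^[4] P.toPoly = 0 :=
  iterate_derivative_eq_zero (natDegree_cubic_le.trans_lt (by norm_num))

end General

/-- The cubic `q` with `q 0 = 1`, `q' 0 = m` and the Navier (simply supported) boundary conditions
`q s = q'' s = 0` at `s ≠ 0`. The pieces of `psi m` are the cases `s = -1` and `s = 1`. -/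
noncomputable def navierCubic (s m : ℝ) : Cubic ℝ where
  a := (m * s + 1) / (2 * s ^ 3)
  b := -(3 * (m * s + 1) / (2 * s ^ 2))
  c := m
  d := 1

namespace navierCubic

theorem eval_zero (s m : ℝ) : (navierCubic s m).toPoly.eval 0 = 1 := by
  simp [navierCubic, Cubic.toPoly]

theorem eval_derivative_zero (s m : ℝ) : (derivative (navierCubic s m).toPoly).eval 0 = m := by
  simp [navierCubic, Cubic.toPoly]

theorem eval_endpoint {s : ℝ} (hs : s ≠ 0) (m : ℝ) : (navierCubic s m).toPoly.eval s = 0 := by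
  simp only [navierCubic, Cubic.toPoly, eval_add, eval_mul, eval_C, eval_pow, eval_X]
  field_simp
  ring

theorem eval_iterate_derivative_two_endpoint {s : ℝ} (hs : s ≠ 0) (m : ℝ) :
    (derivative^[2] (navierCubic s m).toPoly).eval s = 0 := by
  rw [eval_iterate_derivative_two_toPoly, navierCubic]
  field_simp
  ring

end navierCubic

section Psi

variable (α : ℝ) {x : ℝ}

theorem psi_eqOn_Iic : EqOn (psi α) (fun x => (navierCubic (-1) α).toPoly.eval x) (Iic 0) := by
  intro x hx
  simp only [psi, if_pos (mem_Iic.1 hx), navierCubic, Cubic.toPoly, eval_add, eval_mul, eval_C,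
    eval_pow, eval_X]
  ring

theorem psi_zero : psi α 0 = 1 :=
  (psi_eqOn_Iic α self_mem_Iic).trans (navierCubic.eval_zero _ α)

theorem psi_eqOn_Ici : EqOn (psi α) (fun x => (navierCubic 1 α).toPoly.eval x) (Ici 0) := by
  intro x hx
  obtain rfl | hx : 0 = x ∨ 0 < x := (mem_Ici.1 hx).eq_or_lt
  · exact (psi_zero α).trans (navierCubic.eval_zero 1 α).symm
  · simp only [psi, if_neg hx.not_ge, navierCubic, Cubic.toPoly, eval_add, eval_mul, eval_C,
      eval_pow, eval_X]
    ring

theorem psi_eventuallyEq_of_neg (hx : x < 0) :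
    psi α =ᶠ[𝓝 x] fun y => (navierCubic (-1) α).toPoly.eval y :=
  (psi_eqOn_Iic α).eventuallyEq_of_mem (Iic_mem_nhds hx)

theorem psi_eventuallyEq_of_pos (hx : 0 < x) :
    psi α =ᶠ[𝓝 x] fun y => (navierCubic 1 α).toPoly.eval y :=
  (psi_eqOn_Ici α).eventuallyEq_of_mem (Ici_mem_nhds hx)

theorem psi_eventuallyEq_cubic_of_ne_zero (hx : x ≠ 0) :
    ∃ P : Cubic ℝ, psi α =ᶠ[𝓝 x] fun y => P.toPoly.eval y :=
  hx.lt_or_gt.elim (fun hneg => ⟨_, psi_eventuallyEq_of_neg α hneg⟩)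
    fun hpos => ⟨_, psi_eventuallyEq_of_pos α hpos⟩

theorem hasDerivAt_psi_zero : HasDerivAt (psi α) α 0 :=
  hasDerivAt_of_eqOn_Iic_of_eqOn_Ici (psi_eqOn_Iic α) (psi_eqOn_Ici α)
    ((Polynomial.hasDerivAt _ 0).congr_deriv (navierCubic.eval_derivative_zero _ α))
    ((Polynomial.hasDerivAt _ 0).congr_deriv (navierCubic.eval_derivative_zero _ α))

theorem differentiable_psi : Differentiable ℝ (psi α) := by
  intro x
  obtain rfl | hx := eq_or_ne x 0
  · exact (hasDerivAt_psi_zero α).differentiableAt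
  · obtain ⟨P, hP⟩ := psi_eventuallyEq_cubic_of_ne_zero α hx
    exact P.toPoly.differentiableAt.congr_of_eventuallyEq hP

theorem iterate_deriv_four_psi_of_ne_zero (hx : x ≠ 0) : deriv^[4] (psi α) x = 0 := by
  obtain ⟨P, hP⟩ := psi_eventuallyEq_cubic_of_ne_zero α hx
  rw [iterate_deriv_eq_eval_of_eventuallyEq hP, iterate_derivative_four_toPoly,
    Polynomial.eval_zero]

theorem psi_neg_one : psi α (-1) = 0 :=
  (psi_eqOn_Iic α (mem_Iic.2 neg_one_lt_zero.le)).trans (navierCubic.eval_endpoint (by norm_num) α)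

theorem psi_one : psi α 1 = 0 :=
  (psi_eqOn_Ici α (mem_Ici.2 zero_le_one)).trans (navierCubic.eval_endpoint one_ne_zero α)

theorem iterate_deriv_two_psi_neg_one : deriv^[2] (psi α) (-1) = 0 :=
  (iterate_deriv_eq_eval_of_eventuallyEq (psi_eventuallyEq_of_neg α neg_one_lt_zero) 2).trans
    (navierCubic.eval_iterate_derivative_two_endpoint (by norm_num) α)

theorem iterate_deriv_two_psi_one : deriv^[2] (psi α) 1 = 0 :=
  (iterate_deriv_eq_eval_of_eventuallyEq (psi_eventuallyEq_of_pos α one_pos) 2).trans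
    (navierCubic.eval_iterate_derivative_two_endpoint one_ne_zero α)

end Psi

theorem psi_properties (α : ℝ) :
    psi α (-1) = 0 ∧ psi α 1 = 0 ∧ psi α 0 = 1 ∧
    (∀ x : ℝ, DifferentiableAt ℝ (psi α) x) ∧
    deriv (psi α) 0 = α ∧
    deriv^[2] (psi α) (-1) = 0 ∧ deriv^[2] (psi α) 1 = 0 ∧
    ∀ x ∈ Ioo (-1 : ℝ) 0 ∪ Ioo (0 : ℝ) 1, deriv^[4] (psi α) x = 0 := by
  refine ⟨psi_neg_one α, psi_one α, psi_zero α, differentiable_psi α,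
    (hasDerivAt_psi_zero α).deriv, iterate_deriv_two_psi_neg_one α, iterate_deriv_two_psi_one α,
    fun x hx => iterate_deriv_four_psi_of_ne_zero α ?_⟩
  exact hx.elim (fun hneg => hneg.2.ne) fun hpos => hpos.1.ne'
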